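/- Let d ≥ 1 and let U be a nonempty connected open subset of ℂ^d. Let g₁, …, g_N : U → ℂ be holomorphic, and let (f_j)_{j∈ℕ} be a sequence of holomorphic functions U → ℂ such that for every z ∈ U the family (|f_j(z)|²)_{j∈ℕ} is summable and Σ_{k=1}^N |g_k(z)|² = ∑'_{j∈ℕ} |f_j(z)|². Then every f_j lies in the ℂ-linear span of {g₁, …, g_N} inside the space of functions U → ℂ; in particular the family (f_j)_{j∈ℕ} is not linearly independent over ℂ. -/

import Mathlib

open Filter Topology ComplexConjugate

/-- If `∑ |φ j|²` converges pointwise to a finite sum `∑ |γ k|²` of squares of moduli of holomorphic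
functions on a domain symmetric about the real axis, then the identity polarizes. -/
theorem hasSum_mul_conj_of_hasSum_norm_sq {κ : Type*} [Fintype κ] {S : Set ℂ} (hSo : IsOpen S)
    (hSc : IsPreconnected S) (hS0 : (0 : ℂ) ∈ S) (hSconj : ∀ s ∈ S, conj s ∈ S)
    {γ : κ → ℂ → ℂ} (hγ : ∀ k, DifferentiableOn ℂ (γ k) S)
    {φ : ℕ → ℂ → ℂ} (hφ : ∀ j, DifferentiableOn ℂ (φ j) S)
    (h : ∀ s ∈ S, HasSum (fun j => ‖φ j s‖ ^ 2) (∑ k, ‖γ k s‖ ^ 2)) {s : ℂ} (hs : s ∈ S) :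
    HasSum (fun j => φ j s * conj (φ j (conj s))) (∑ k, γ k s * conj (γ k (conj s))) := by
  have hdiff {u : ℂ → ℂ} (hu : DifferentiableOn ℂ u S) :
      DifferentiableOn ℂ (fun s => u s * conj (u (conj s))) S := by
    refine hu.mul fun s hs => DifferentiableAt.differentiableWithinAt ?_
    exact differentiableAt_conj_conj_iff.2
      (hu.differentiableAt (hSo.mem_nhds (hSconj s hs)))
  have hbound (j : ℕ) (s : ℂ) : ‖φ j s * conj (φ j (conj s))‖ ≤
      (‖φ j s‖ ^ 2 + ‖φ j (conj s)‖ ^ 2) / 2 := by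
    rw [norm_mul, RCLike.norm_conj]
    linarith [two_mul_le_add_sq ‖φ j s‖ ‖φ j (conj s)‖]
  have hmaj {s : ℂ} (hs : s ∈ S) : HasSum (fun j => (‖φ j s‖ ^ 2 + ‖φ j (conj s)‖ ^ 2) / 2)
      ((∑ k, ‖γ k s‖ ^ 2 + ∑ k, ‖γ k (conj s)‖ ^ 2) / 2) :=
    ((h s hs).add (h _ (hSconj s hs))).div_const 2
  have hsumm {s : ℂ} (hs : s ∈ S) : Summable (fun j => φ j s * conj (φ j (conj s))) :=
    (hmaj hs).summable.of_norm_bounded fun j => hbound j s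
  have hconv : TendstoLocallyUniformlyOn
      (fun n s => ∑ j ∈ Finset.range n, (‖φ j s‖ ^ 2 + ‖φ j (conj s)‖ ^ 2) / 2)
      (fun s => (∑ k, ‖γ k s‖ ^ 2 + ∑ k, ‖γ k (conj s)‖ ^ 2) / 2) atTop S := by
    have hcont {u : ℂ → ℂ} (hu : DifferentiableOn ℂ u S) :
        ContinuousOn (fun s => u (conj s)) S :=
      hu.continuousOn.comp Complex.continuous_conj.continuousOn hSconj
    refine Monotone.tendstoLocallyUniformlyOn_of_forall_tendsto (fun n => ?_) (fun s _ => ?_) ?_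
      fun s hs => (hmaj hs).tendsto_sum_nat
    · exact continuousOn_finsetSum _ fun j _ =>
        (((hφ j).continuousOn.norm.pow 2).add ((hcont (hφ j)).norm.pow 2)).div_const 2
    · exact monotone_nat_of_le_succ fun n => by
        rw [Finset.sum_range_succ]
        exact le_add_of_nonneg_right (by positivity)
    · exact ((continuousOn_finsetSum _ fun k _ => (hγ k).continuousOn.norm.pow 2).add
        (continuousOn_finsetSum _ fun k _ => (hcont (hγ k)).norm.pow 2)).div_const 2
  have hlim : TendstoLocallyUniformlyOn
      (fun n s => ∑ j ∈ Finset.range n, φ j s * conj (φ j (conj s)))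
      (fun s => ∑' j, φ j s * conj (φ j (conj s))) atTop S := by
    rw [Metric.tendstoLocallyUniformlyOn_iff] at hconv ⊢
    intro ε hε x hx
    obtain ⟨t, ht, hn⟩ := hconv ε hε x hx
    refine ⟨t ∩ S, inter_mem ht self_mem_nhdsWithin, hn.mono fun n hn y hy => ?_⟩
    refine lt_of_le_of_lt ?_ (hn y hy.1)
    rw [dist_eq_norm, Real.dist_eq,
      ← ((hasSum_nat_add_iff' n).2 (hsumm hy.2).hasSum).tsum_eq]
    exact (tsum_of_norm_bounded ((hasSum_nat_add_iff' n).2 (hmaj hy.2))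
      fun j => hbound (j + n) y).trans (le_abs_self _)
  have hL : AnalyticOnNhd ℂ (fun s => ∑' j, φ j s * conj (φ j (conj s))) S :=
    (hlim.differentiableOn (Eventually.of_forall fun n =>
      DifferentiableOn.fun_sum fun j _ => hdiff (hφ j)) hSo).analyticOnNhd hSo
  have hR : AnalyticOnNhd ℂ (fun s => ∑ k, γ k s * conj (γ k (conj s))) S :=
    (DifferentiableOn.fun_sum fun k _ => hdiff (hγ k)).analyticOnNhd hSo
  have hreal {r : ℝ} (hr : (r : ℂ) ∈ S) :
      ∑' j, φ j r * conj (φ j (conj (r : ℂ))) = ∑ k, γ k r * conj (γ k (conj (r : ℂ))) := by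
    have := ((h r hr).mapL Complex.ofRealCLM).tsum_eq
    simpa [Complex.conj_ofReal, Complex.mul_conj'] using this
  have hfreq : ∃ᶠ s in 𝓝[≠] (0 : ℂ),
      ∑' j, φ j s * conj (φ j (conj s)) = ∑ k, γ k s * conj (γ k (conj s)) := by
    have htend : Tendsto ((↑) : ℝ → ℂ) (𝓝[≠] 0) (𝓝[≠] 0) := by
      refine tendsto_nhdsWithin_iff.2 ⟨?_, ?_⟩
      · exact (Complex.continuous_ofReal.tendsto' 0 0 Complex.ofReal_zero).mono_left
          nhdsWithin_le_nhds
      · filter_upwards [self_mem_nhdsWithin] with r hr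
        simpa using hr
    refine htend.frequently (Eventually.frequently ?_)
    filter_upwards [htend (mem_nhdsWithin_of_mem_nhds (hSo.mem_nhds hS0))] with r hr
    exact hreal hr
  exact (hsumm hs).hasSum_iff.2 (hL.eqOn_of_preconnected_of_frequently_eq hR hSc hS0 hfreq hs)

/-- Polarization of an identity between hermitian sums of squares on a convex open set. -/
theorem hasSum_mul_conj_of_convex {E κ : Type*} [NormedAddCommGroup E] [NormedSpace ℂ E]
    [NormedSpace ℝ E] [IsScalarTower ℝ ℂ E]
    [Fintype κ] {V : Set E} (hVo : IsOpen V) (hVc : Convex ℝ V)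
    {g : κ → E → ℂ} (hg : ∀ k, DifferentiableOn ℂ (g k) V)
    {f : ℕ → E → ℂ} (hf : ∀ j, DifferentiableOn ℂ (f j) V)
    (h : ∀ z ∈ V, HasSum (fun j => ‖f j z‖ ^ 2) (∑ k, ‖g k z‖ ^ 2)) {z w : E}
    (hz : z ∈ V) (hw : w ∈ V) :
    HasSum (fun j => f j z * conj (f j w)) (∑ k, g k z * conj (g k w)) := by
  set ℓ : ℂ → E := fun s => ((1 - s * Complex.I) / 2) • z + ((1 + s * Complex.I) / 2) • w with hℓ
  have hℓd : Differentiable ℂ ℓ := by fun_prop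
  have hℓI : ℓ Complex.I = z := by simp [hℓ]
  have hℓI' : ℓ (conj Complex.I) = w := by simp [hℓ]
  have hsm (c : ℝ) (x : E) : c • x = (c : ℂ) • x := (algebraMap_smul ℂ c x).symm
  have hline : Convex ℝ (ℓ ⁻¹' V) := by
    intro s hs t ht a b ha hb hab
    have key : ℓ (a • s + b • t) = a • ℓ s + b • ℓ t := by
      have hab' : (b : ℂ) = 1 - a := by
        rw [eq_sub_iff_add_eq', ← Complex.ofReal_add, hab, Complex.ofReal_one]
      simp only [hℓ, hsm, hab', Complex.real_smul]
      module
    rw [Set.mem_preimage, key]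
    exact hVc hs ht ha hb hab
  have hconj : Convex ℝ ((fun s : ℂ => ℓ (conj s)) ⁻¹' V) :=
    hline.linear_preimage Complex.conjAe.toLinearMap
  have hℓ0 : ℓ 0 ∈ V := by
    have : ℓ 0 = (1 / 2 : ℝ) • z + (1 / 2 : ℝ) • w := by
      simp [hℓ, hsm]
    rw [this]
    exact hVc hz hw (by norm_num) (by norm_num) (by norm_num)
  have := hasSum_mul_conj_of_hasSum_norm_sq
    (S := ℓ ⁻¹' V ∩ (fun s : ℂ => ℓ (conj s)) ⁻¹' V)
    ((hVo.preimage hℓd.continuous).inter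
      (hVo.preimage (hℓd.continuous.comp Complex.continuous_conj)))
    (hline.inter hconj).isPreconnected ⟨hℓ0, by simpa using hℓ0⟩
    (fun s hs => ⟨hs.2, by simpa using hs.1⟩)
    (γ := fun k s => g k (ℓ s)) (fun k => (hg k).comp hℓd.differentiableOn fun s hs => hs.1)
    (φ := fun j s => f j (ℓ s)) (fun j => (hf j).comp hℓd.differentiableOn fun s hs => hs.1)
    (fun s hs => h _ hs.1) (s := Complex.I)
    ⟨by simpa [hℓI] using hz, by simpa only [Set.mem_preimage, hℓI'] using hw⟩
  simpa only [hℓI, hℓI'] using this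

/-- If the reproducing kernel of a sequence `f` equals that of a finite family `g`, then every `f j`
is a linear combination of the `g k`. -/
theorem mem_span_of_hasSum_mul_conj {X κ : Type*} [Fintype κ] {g : κ → X → ℂ} {f : ℕ → X → ℂ}
    (h : ∀ z w, HasSum (fun j => f j z * conj (f j w)) (∑ k, g k z * conj (g k w))) (j : ℕ) :
    f j ∈ Submodule.span ℂ (Set.range g) := by
  have hker : ⨅ k, LinearMap.ker (Finsupp.linearCombination ℂ (g k)) ≤
      LinearMap.ker (Finsupp.linearCombination ℂ (f j)) := by
    intro v hv
    simp only [Submodule.mem_iInf, LinearMap.mem_ker] at hv ⊢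
    have expand (u : X → ℂ) : ((‖Finsupp.linearCombination ℂ u v‖ ^ 2 : ℝ) : ℂ) =
        ∑ x ∈ v.support, ∑ y ∈ v.support, v x * conj (v y) * (u x * conj (u y)) := by
      rw [Complex.ofReal_pow, ← Complex.mul_conj', Finsupp.linearCombination_apply, Finsupp.sum,
        map_sum, Finset.sum_mul_sum]
      refine Finset.sum_congr rfl fun x _ => Finset.sum_congr rfl fun y _ => ?_
      simp only [smul_eq_mul, map_mul]
      ring
    have hsum : HasSum (fun i => ((‖Finsupp.linearCombination ℂ (f i) v‖ ^ 2 : ℝ) : ℂ))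
        ((∑ k, ‖Finsupp.linearCombination ℂ (g k) v‖ ^ 2 : ℝ) : ℂ) := by
      have := hasSum_sum (s := v.support) fun x _ => hasSum_sum (s := v.support) fun y _ =>
        (h x y).mul_left (v x * conj (v y))
      simp only [Complex.ofReal_sum, expand]
      simp only [Finset.mul_sum] at this
      rw [Finset.sum_comm, Finset.sum_congr rfl fun x _ => Finset.sum_comm]
      exact this
    have hzero := Complex.hasSum_ofReal.1 hsum
    simp only [hv, norm_zero, ne_eq, OfNat.ofNat_ne_zero, not_false_eq_true, zero_pow,
      Finset.sum_const_zero] at hzero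
    simpa using congrFun ((hasSum_zero_iff_of_nonneg fun i => by positivity).1 hzero) j
  obtain ⟨c, hc⟩ := (Submodule.mem_span_range_iff_exists_fun ℂ).1 (mem_span_of_iInf_ker_le_ker hker)
  refine (Submodule.mem_span_range_iff_exists_fun ℂ).2 ⟨c, funext fun x => ?_⟩
  simpa using LinearMap.congr_fun hc (Finsupp.single x 1)

/-- If `Σ_{k=1}^N |g_k|² = ∑'_j |f_j|²` on a nonempty connected open
`U ⊆ ℂ^d` with all functions holomorphic, then every `f_j` lies in the span of the `g_k`
(as functions on `U`); in particular the family `(f_j)` is not linearly independent. -/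
theorem stmt_1 (d : ℕ) (hd : 1 ≤ d) (N : ℕ)
    (U : Set (Fin d → ℂ)) (hUo : IsOpen U) (hUc : IsConnected U)
    (g : Fin N → (Fin d → ℂ) → ℂ) (hg : ∀ k, AnalyticOn ℂ (g k) U)
    (f : ℕ → (Fin d → ℂ) → ℂ) (hf : ∀ j, AnalyticOn ℂ (f j) U)
    (hsum : ∀ z ∈ U, Summable fun j => ‖f j z‖ ^ 2)
    (heq : ∀ z ∈ U, ∑ k, ‖g k z‖ ^ 2 = ∑' j, ‖f j z‖ ^ 2) :
    (∀ j, U.restrict (f j) ∈ Submodule.span ℂ (Set.range fun k => U.restrict (g k))) ∧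
      ¬ LinearIndependent ℂ (fun j => U.restrict (f j)) := by
  have hspan (j : ℕ) :
      U.restrict (f j) ∈ Submodule.span ℂ (Set.range fun k => U.restrict (g k)) := by
    obtain ⟨p, hp⟩ := hUc.nonempty
    obtain ⟨r, hr, hrU⟩ := Metric.isOpen_iff.1 hUo p hp
    have hlocal : (fun z : Metric.ball p r => f j z) ∈
        Submodule.span ℂ (Set.range fun k (z : Metric.ball p r) => g k z) :=
      mem_span_of_hasSum_mul_conj (f := fun j (z : Metric.ball p r) => f j z)
        (fun z w => hasSum_mul_conj_of_convex Metric.isOpen_ball (convex_ball p r)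
          (fun k => (hg k).differentiableOn.mono hrU) (fun j => (hf j).differentiableOn.mono hrU)
          (fun x hx => heq x (hrU hx) ▸ (hsum x (hrU hx)).hasSum) z.2 w.2) j
    obtain ⟨c, hc⟩ := (Submodule.mem_span_range_iff_exists_fun ℂ).1 hlocal
    have hf' := hUo.analyticOn_iff_analyticOnNhd.1 (hf j)
    have hg' : AnalyticOnNhd ℂ (fun z => ∑ k, c k * g k z) U :=
      Finset.analyticOnNhd_fun_sum _ fun k _ =>
        analyticOnNhd_const.mul (hUo.analyticOn_iff_analyticOnNhd.1 (hg k))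
    have hEq : Set.EqOn (fun z => ∑ k, c k * g k z) (f j) U := by
      refine hg'.eqOn_of_preconnected_of_eventuallyEq hf' hUc.isPreconnected hp ?_
      filter_upwards [Metric.ball_mem_nhds p hr] with z hz
      simpa using congrFun hc ⟨z, hz⟩
    refine (Submodule.mem_span_range_iff_exists_fun ℂ).2 ⟨c, funext fun z => ?_⟩
    simpa [Set.restrict] using hEq z.2
  refine ⟨hspan, fun hli => ?_⟩
  have : FiniteDimensional ℂ (Submodule.span ℂ (Set.range fun k => U.restrict (g k))) :=
    FiniteDimensional.span_of_finite ℂ (Set.finite_range _)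
  have hli' : LinearIndependent ℂ (fun j => (⟨U.restrict (f j), hspan j⟩ :
      Submodule.span ℂ (Set.range fun k => U.restrict (g k)))) :=
    LinearIndependent.of_comp (Submodule.subtype _) hli
  exact not_finite_iff_infinite.2 inferInstance hli'.finite
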